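/- Let n ≥ 2. The number of solutions x ∈ K_n of the equation x·a_1 = f equals 1 + |K_{n-1}|, i.e. the cardinality of the set {x ∈ K_n : x·a_1 = f} is 1 + |K_{n-1}|. -/

import Mathlib

namespace Kiselman

/-- The defining relations of Kiselman's semigroup on the free monoid over `Fin n`,
where the index `i : Fin n` represents the generator `a_{i+1}` (so letters are 0-based). -/
def Rel (n : ℕ) : FreeMonoid (Fin n) → FreeMonoid (Fin n) → Prop := fun u v =>
  (∃ i : Fin n, u = .of i * .of i ∧ v = .of i) ∨
  (∃ i j : Fin n, j < i ∧
    ((u = .of i * .of j * .of i ∧ v = .of i * .of j) ∨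
     (u = .of j * .of i * .of j ∧ v = .of i * .of j)))

/-- Kiselman's semigroup (monoid) `K n`, presented by the relations `Rel n`. -/
def K (n : ℕ) : Type := (conGen (Rel n)).Quotient

instance (n : ℕ) : Monoid (K n) := inferInstanceAs (Monoid (conGen (Rel n)).Quotient)

/-- The canonical epimorphism `φ` from the free monoid onto `K n`. -/
def phi (n : ℕ) : FreeMonoid (Fin n) →* K n := Con.mk' _

/-- `φ` applied to a word given as a list of (0-based) letters. -/
def phiL (n : ℕ) (w : List (Fin n)) : K n := phi n (FreeMonoid.ofList w)

/-- The generator `a_{i+1}` of `K n` (`i` is the 0-based index). -/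
def gen {n : ℕ} (i : Fin n) : K n := phi n (FreeMonoid.of i)

/-- The word `a_hi a_{hi-1} ⋯ a_lo` (letters named 1-based), as a list of 0-based indices:
`[hi-1, hi-2, …, lo-1]` (capped at `n`). -/
def descList (n lo hi : ℕ) : List (Fin n) :=
  ((List.finRange n).filter (fun k => decide (lo ≤ k.val + 1 ∧ k.val + 1 ≤ hi))).reverse

/-- The zero element `f = a_n a_{n-1} ⋯ a_2 a_1` of `K n`. -/
def fEl (n : ℕ) : K n := phiL n (descList n 1 n)

/-- A word `w` is canonical if for every factorization `w = p ++ [i] ++ u ++ [i] ++ q`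
there are letters `j > i` and `k < i` occurring in `u`. -/
def Canonical {n : ℕ} (w : List (Fin n)) : Prop :=
  ∀ (p u q : List (Fin n)) (i : Fin n),
    w = p ++ [i] ++ u ++ [i] ++ q →
    (∃ j ∈ u, i < j) ∧ (∃ k ∈ u, k < i)

/-- The submonoid of `K n` generated by `{a_2, a_3, …, a_n}`. -/
def upper (n : ℕ) : Submonoid (K n) := Submonoid.closure (gen '' {i : Fin n | i.val ≠ 0})

/-- The submonoid of `K n` generated by `{a_1, a_2, …, a_{n-1}}`. -/
def lower (n : ℕ) : Submonoid (K n) := Submonoid.closure (gen '' {i : Fin n | i.val + 1 ≠ n})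

/-- `m(x) = min { i ∈ {0,…,n} : x ⬝ (a_i a_{i-1} ⋯ a_1) = f }`. -/
noncomputable def mIdx {n : ℕ} (x : K n) : ℕ :=
  sInf {i : ℕ | x * phiL n (descList n 1 i) = fEl n}

variable {n : ℕ}

theorem gen_mul_self (i : Fin n) : (gen i : K n) * gen i = gen i := by
  have h : conGen (Rel n) (.of i * .of i) (.of i) := ConGen.Rel.of _ _ (Or.inl ⟨i, rfl, rfl⟩)
  exact ((conGen (Rel n)).eq).2 h

theorem gen_mul_gen_mul_gen_of_lt {i j : Fin n} (h : j < i) :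
    (gen i : K n) * gen j * gen i = gen i * gen j := by
  have h : conGen (Rel n) (.of i * .of j * .of i) (.of i * .of j) :=
    ConGen.Rel.of _ _ (Or.inr ⟨i, j, h, Or.inl ⟨rfl, rfl⟩⟩)
  exact ((conGen (Rel n)).eq).2 h

theorem gen_mul_gen_mul_gen_of_gt {i j : Fin n} (h : j < i) :
    (gen j : K n) * gen i * gen j = gen i * gen j := by
  have h : conGen (Rel n) (.of j * .of i * .of j) (.of i * .of j) :=
    ConGen.Rel.of _ _ (Or.inr ⟨i, j, h, Or.inr ⟨rfl, rfl⟩⟩)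
  exact ((conGen (Rel n)).eq).2 h

theorem induction_right {P : K n → Prop} (one : P 1)
    (mul_gen : ∀ x i, P x → P (x * gen i)) (x : K n) : P x := by
  obtain ⟨w, rfl⟩ : ∃ w, phi n w = x := Con.mk'_surjective x
  have key : ∀ y, P y → P (y * phi n w) := by
    induction w using FreeMonoid.inductionOn' with
    | one => simp
    | of_mul i w ih =>
      intro y hy
      rw [map_mul, ← mul_assoc]
      exact ih _ (mul_gen y i hy)
  simpa using key 1 one

/-- The universal property of the presentation of `K n`. -/
def lift {M : Type*} [Monoid M] (g : Fin n → M) (idem : ∀ i, g i * g i = g i)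
    (left : ∀ i j, j < i → g i * g j * g i = g i * g j)
    (right : ∀ i j, j < i → g j * g i * g j = g i * g j) : K n →* M :=
  Con.lift (conGen (Rel n)) (FreeMonoid.lift g) <| Con.conGen_le.2 <| by
    rintro u v (⟨i, rfl, rfl⟩ | ⟨i, j, h, ⟨rfl, rfl⟩ | ⟨rfl, rfl⟩⟩)
    · simpa [Con.ker_rel] using idem i
    · simpa [Con.ker_rel] using left i j h
    · simpa [Con.ker_rel] using right i j h

@[simp]
theorem lift_gen {M : Type*} [Monoid M] (g : Fin n → M) (idem left right) (i : Fin n) :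
    lift g idem left right (gen i) = g i := by
  change Con.lift (conGen (Rel n)) (FreeMonoid.lift g) _ (Con.mk' _ (FreeMonoid.of i)) = _
  rw [Con.lift_mk']
  simp

/-- The embedding of `K n` into `K (n + 1)` shifting every generator by one. -/
def shift (n : ℕ) : K n →* K (n + 1) :=
  lift (fun i => gen i.succ) (fun _ => gen_mul_self _)
    (fun _ _ h => gen_mul_gen_mul_gen_of_lt (Fin.succ_lt_succ_iff.2 h))
    (fun _ _ h => gen_mul_gen_mul_gen_of_gt (Fin.succ_lt_succ_iff.2 h))

@[simp]
theorem shift_gen (i : Fin n) : shift n (gen i) = gen i.succ := lift_gen ..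

/-- The epimorphism `K (n + 1) → K n` that deletes the smallest generator. -/
def del (n : ℕ) : K (n + 1) →* K n :=
  lift (Fin.cases 1 gen)
    (fun i => by cases i using Fin.cases <;> simp [gen_mul_self])
    (fun i j h => by
      cases i using Fin.cases
      · simp at h
      cases j using Fin.cases
      · simp [gen_mul_self]
      · simpa using gen_mul_gen_mul_gen_of_lt (Fin.succ_lt_succ_iff.1 h))
    (fun i j h => by
      cases i using Fin.cases
      · simp at h
      cases j using Fin.cases
      · simp
      · simpa using gen_mul_gen_mul_gen_of_gt (Fin.succ_lt_succ_iff.1 h))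

@[simp]
theorem del_gen_zero : del n (gen 0) = 1 := lift_gen ..

@[simp]
theorem del_gen_succ (i : Fin n) : del n (gen i.succ) = gen i := lift_gen ..

@[simp]
theorem del_shift (x : K n) : del n (shift n x) = x := by
  induction x using induction_right with
  | one => simp
  | mul_gen x i ih => simp [ih]

theorem fEl_succ (n : ℕ) : fEl (n + 1) = shift n (fEl n) * gen 0 := by
  have desc (k : ℕ) : descList k 1 k = (List.finRange k).reverse := by
    simp only [descList, List.reverse_inj, List.filter_eq_self]
    intro a _
    simp
  have map (l : List (Fin n)) : phiL (n + 1) (l.map Fin.succ) = shift n (phiL n l) := by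
    induction l with
    | nil => exact (map_one (shift n)).symm
    | cons i l ih =>
      change gen i.succ * phiL (n + 1) (l.map Fin.succ) = shift n (gen i * phiL n l)
      rw [map_mul, shift_gen, ih]
  rw [fEl, fEl, desc, desc, List.finRange_succ, List.reverse_cons, ← List.map_reverse, ← map]
  exact map_mul (phi (n + 1)) (FreeMonoid.ofList _) (FreeMonoid.of 0)

theorem mul_gen_zero (x : K (n + 1)) : x * gen 0 = shift n (del n x) * gen 0 := by
  induction x using induction_right with
  | one => simp
  | mul_gen x i ih =>
    cases i using Fin.cases with
    | zero => simp [mul_assoc, gen_mul_self, ih]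
    | succ i =>
      rw [mul_assoc, ← gen_mul_gen_mul_gen_of_gt (Fin.succ_pos i), ← mul_assoc, ← mul_assoc, ih,
        mul_assoc _ (gen 0), mul_assoc _ (gen 0 * _), gen_mul_gen_mul_gen_of_gt (Fin.succ_pos i)]
      simp [mul_assoc]

instance : Subsingleton (K 0) where
  allEq x y := by
    have h (z : K 0) : z = 1 := by
      induction z using induction_right with
      | one => rfl
      | mul_gen x i ih => exact i.elim0
    rw [h x, h y]

theorem mul_fEl (x : K n) : x * fEl n = fEl n := by
  induction n with
  | zero => exact Subsingleton.elim _ _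
  | succ n ih => rw [fEl_succ, ← mul_assoc, mul_gen_zero]; simp [ih]

theorem mul_gen_zero_eq_fEl_iff (x : K (n + 1)) :
    x * gen 0 = fEl (n + 1) ↔ del n x = fEl n := by
  constructor
  · intro h
    simpa [fEl_succ] using congrArg (del n) h
  · intro h
    rw [mul_gen_zero, h, fEl_succ]

/-- The right action of `K n` on `S` in which `gen i` acts by `g i`. -/
def act {S : Type*} (g : Fin n → S → S) (idem : ∀ i s, g i (g i s) = g i s)
    (left : ∀ i j, j < i → ∀ s, g i (g j (g i s)) = g j (g i s))
    (right : ∀ i j, j < i → ∀ s, g j (g i (g j s)) = g j (g i s)) (x : K n) : S → S :=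
  (lift (M := (Function.End S)ᵐᵒᵖ) (fun i => .op (g i))
    (fun i => MulOpposite.unop_injective (funext (idem i)))
    (fun i j h => MulOpposite.unop_injective (funext (left i j h)))
    (fun i j h => MulOpposite.unop_injective (funext (right i j h))) x).unop

section act

variable {S : Type*} (g : Fin n → S → S) (idem left right)

theorem act_one (s : S) : act g idem left right 1 s = s := by
  rw [act, map_one]
  rfl

theorem act_mul (x y : K n) (s : S) :
    act g idem left right (x * y) s = act g idem left right y (act g idem left right x s) := by
  rw [act, map_mul]
  rfl

theorem act_gen (i : Fin n) (s : S) : act g idem left right (gen i) s = g i s := by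
  rw [act, lift_gen]
  rfl

end act

/-- The right action of `K (n + 1)` on pairs: the first component records the product of the
letters read so far, the smallest one being ignored, and the second one records the value the
first one had when the smallest letter was last read. -/
def split : K (n + 1) → K n × Option (K n) → K n × Option (K n) :=
  act (fun i s => Fin.cases (s.1, some s.1) (fun i => (s.1 * gen i, s.2)) i)
    (fun i s => by cases i using Fin.cases <;> simp [mul_assoc, gen_mul_self])
    (fun i j h s => by
      cases i using Fin.cases
      · simp at h
      cases j using Fin.cases
      · simp [mul_assoc, gen_mul_self]
      · simpa [mul_assoc] using
          congrArg (s.1 * ·) (gen_mul_gen_mul_gen_of_lt (Fin.succ_lt_succ_iff.1 h)))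
    (fun i j h s => by
      cases i using Fin.cases
      · simp at h
      cases j using Fin.cases
      · simp
      · simpa [mul_assoc] using
          congrArg (s.1 * ·) (gen_mul_gen_mul_gen_of_gt (Fin.succ_lt_succ_iff.1 h)))

theorem split_one (s : K n × Option (K n)) : split 1 s = s := act_one ..

theorem split_mul (x y : K (n + 1)) (s) : split (x * y) s = split y (split x s) := act_mul ..

theorem split_gen_zero (s : K n × Option (K n)) : split (gen 0) s = (s.1, some s.1) := act_gen ..

theorem split_gen_succ (i : Fin n) (s) : split (gen i.succ) s = (s.1 * gen i, s.2) := act_gen ..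

theorem split_shift (y : K n) (s) : split (shift n y) s = (s.1 * y, s.2) := by
  induction y using induction_right with
  | one => simp [split_one]
  | mul_gen y i ih => simp [split_mul, ih, split_gen_succ, mul_assoc]

theorem eq_shift_or (x : K (n + 1)) :
    x = shift n (del n x) ∨ ∃ p q, p * q = del n x ∧ x = shift n p * gen 0 * shift n q := by
  induction x using induction_right with
  | one => simp
  | mul_gen x i ih =>
    cases i using Fin.cases with
    | zero => exact Or.inr ⟨del n x, 1, by simp, by simpa using mul_gen_zero x⟩
    | succ i =>
      rcases ih with h | ⟨p, q, hpq, h⟩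
      · left
        simp [← h]
      · exact Or.inr ⟨p, q * gen i, by simp [← hpq, mul_assoc], by
          nth_rewrite 1 [h]
          simp [mul_assoc]⟩

instance finite_K (n : ℕ) : Finite (K n) := by
  induction n with
  | zero => infer_instance
  | succ n ih =>
    let F : K n ⊕ K n × K n → K (n + 1) :=
      Sum.elim (shift n) (fun z => shift n z.1 * gen 0 * shift n z.2)
    refine Finite.of_surjective F fun x => ?_
    rcases eq_shift_or x with h | ⟨p, q, -, h⟩
    · exact ⟨.inl (del n x), h.symm⟩
    · exact ⟨.inr (p, q), h.symm⟩

/-- The right action of `K n` on `ℕ` in which the generator `gen i` sends `i + 1` to `i` and fixes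
every other number. -/
def level : K n → ℕ → ℕ :=
  act (fun i l => if l = i.val + 1 then i.val else l)
    (fun i l => by grind)
    (fun i j h l => by
      have h : j.val < i.val := h
      grind)
    (fun i j h l => by
      have h : j.val < i.val := h
      grind)

theorem level_one (l : ℕ) : level (1 : K n) l = l := act_one ..

theorem level_mul (x y : K n) (l : ℕ) : level (x * y) l = level y (level x l) := act_mul ..

theorem level_gen (i : Fin n) (l : ℕ) :
    level (gen i) l = if l = i.val + 1 then i.val else l := act_gen ..

theorem level_shift (x : K n) (l : ℕ) : level (shift n x) (l + 1) = level x l + 1 := by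
  induction x using induction_right with
  | one => simp [level_one]
  | mul_gen x i ih =>
    simp only [map_mul, level_mul, ih, shift_gen, level_gen, Fin.val_succ]
    grind

theorem level_fEl (n : ℕ) : level (fEl n) n = 0 := by
  induction n with
  | zero => simp [Subsingleton.elim (fEl 0) 1, level_one]
  | succ n ih => simp [fEl_succ, level_mul, level_shift, ih, level_gen]

/-- `x` is saturated at `l` if every product with left factor `x` absorbs on the right the
generators of index at least `l`. -/
def Saturated (l : ℕ) (x : K n) : Prop :=
  ∀ i : Fin n, l ≤ i.val → ∀ u, x * u * gen i = x * u

theorem Saturated.mul_right {l : ℕ} {x : K n} (h : Saturated l x) (u : K n) :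
    Saturated l (x * u) := fun i hi v => by
  rw [mul_assoc x u v, h i hi]

theorem Saturated.mul_gen {k : Fin n} {x : K n} (h : Saturated (k.val + 1) x) :
    Saturated k.val (x * gen k) := by
  intro i hi u
  rcases hi.eq_or_lt with hik | hik
  · obtain rfl : k = i := Fin.ext hik
    induction u using induction_right with
    | one => simp [mul_assoc, gen_mul_self]
    | mul_gen u j ih =>
      rcases lt_trichotomy j k with hj | rfl | hj
      · rw [← mul_assoc, ← ih, mul_assoc _ (gen k), mul_assoc _ (gen k * gen j),
          gen_mul_gen_mul_gen_of_lt hj]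
      · rw [← mul_assoc, ih, ih]
      · have := h.mul_right (gen k) j hj u
        rw [← mul_assoc, this, ih]
  · exact h.mul_right _ i hik u

theorem Saturated.mul_shift {l : ℕ} {x : K (n + 1)} (h : Saturated (l + 1) x) (u : K n) :
    Saturated (level u l + 1) (x * shift n u) := by
  induction u using induction_right with
  | one => simpa [level_one] using h
  | mul_gen u i ih =>
    rw [level_mul, level_gen, map_mul, ← mul_assoc, shift_gen]
    split_ifs with hl
    · rw [hl] at ih
      exact ih.mul_gen (k := i.succ)
    · exact ih.mul_right _

theorem Saturated.mul_shift_eq {x : K (n + 1)} (h : Saturated 1 x) (u : K n) :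
    x * shift n u = x := by
  induction u using induction_right with
  | one => simp
  | mul_gen u i ih =>
    have := h i.succ (by simp) (shift n u)
    rw [map_mul, ← mul_assoc, shift_gen, this, ih]

theorem shift_mul_gen_zero_mul_shift {p q : K n} (h : p * q = fEl n) :
    shift n p * gen 0 * shift n q = shift n p * gen 0 * shift n (fEl n) := by
  have one : Saturated (n + 1) (1 : K (n + 1)) := fun i hi => absurd i.isLt (by omega)
  have sat := ((one.mul_shift p).mul_right (gen 0)).mul_shift q
  rw [← level_mul, h, level_fEl, one_mul] at sat
  rw [← sat.mul_shift_eq (fEl n), mul_assoc _ (shift n q), ← map_mul, mul_fEl]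

/-- The solutions of `del n x = fEl n`, parametrised by `Option (K n)`. -/
def solution (n : ℕ) : Option (K n) → {x : K (n + 1) // x * gen 0 = fEl (n + 1)}
  | none => ⟨shift n (fEl n), (fEl_succ n).symm⟩
  | some y => ⟨shift n y * gen 0 * shift n (fEl n),
      (mul_gen_zero_eq_fEl_iff _).2 (by simp [mul_fEl])⟩

theorem solution_bijective (n : ℕ) : Function.Bijective (solution n) := by
  constructor
  · have key (o : Option (K n)) : (split (solution n o).1 (1, none)).2 = o := by
      cases o <;> simp [solution, split_mul, split_shift, split_gen_zero]
    exact fun o o' h => by rw [← key o, h, key o']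
  · rintro ⟨x, hx⟩
    have hd := (mul_gen_zero_eq_fEl_iff x).1 hx
    rcases eq_shift_or x with h | ⟨p, q, hpq, h⟩
    · rw [hd] at h
      exact ⟨none, Subtype.ext h.symm⟩
    · rw [shift_mul_gen_zero_mul_shift (hpq.trans hd)] at h
      exact ⟨some p, Subtype.ext h.symm⟩

/-- The number of solutions of `x * a_1 = f` in `K n` is `1 + |K_{n-1}|`. -/
theorem card_solutions (n : ℕ) (hn : 2 ≤ n) :
    Nat.card {x : K n // x * gen ⟨0, by omega⟩ = fEl n} = 1 + Nat.card (K (n - 1)) := by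
  obtain ⟨m, rfl⟩ : ∃ m, n = m + 1 := ⟨n - 1, by omega⟩
  rw [Nat.add_sub_cancel, add_comm 1, ← Finite.card_option]
  exact (Nat.card_congr (Equiv.ofBijective _ (solution_bijective m))).symm

end Kiselman
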